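/- arXiv:1802.04052 — 2 statements merged into one kernel-verified Lean document; each statement's English description precedes it below -/
import Mathlib

section
/- (Saphar spectrum inclusion) Let λ ∈ ℂ and t > 0 with φ_λ(t) ≠ 0. If the bounded operator c_λ(t)·I − S(t) is Saphar, i.e. it is relatively regular (there is a bounded T with (c_λ(t)·I − S(t))T(c_λ(t)·I − S(t)) = c_λ(t)·I − S(t)) and N(c_λ(t)·I − S(t)) ⊆ R^∞(c_λ(t)·I − S(t)), then λ − A is Saphar: there exists a bounded operator B on X mapping X into D(A) with (λ − A)B(λ − A)x = (λ − A)x for all x ∈ D(A), and N(λ − A) ⊆ R^∞(λ − A). -/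
/-!
Write `U = λ − A`, `C = c_λ(t) − S(t)`, and let `D = D_λ(t)`, `L = L_λ(t)`, which are bounded operators
with range in `D(A)`. Three identities carry the proof:

* `U D = C` on `X` (`Dop_mem_and_apply`): integrating by parts, `D x = E(t)x + λ ∫₀ᵗ e^{λ(t−r)} E(r)x dr`
  with `E(r)x = ∫₀ʳ S(s)x ds`, and `A E(r)x` is known;
* `D U = C` on `D(A)` (`Dop_apply_sub`), because `A` passes through the integral and commutes with `S(r)`;
* `U L + e^{−λt} D = φ_λ(t)` (`Lop_mem_and_apply`), the integral over `[0, t]` of `e^{−λs}` times the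
  first identity at time `s`.

`A` passes through integrals since it is closed, having a bounded resolvent at some point
(`integral_mem_and_apply`).

If `C T C = C`, then for `x ∈ D(A)` the third identity gives
`φ U x = U L U x + e^{−λt} D U x = U L U x + e^{−λt} C T C x = U (L + e^{−λt} D T D) U x`, so
`B = φ⁻¹ (L + e^{−λt} D T D)` is a generalized inverse of `U`. If `U x = 0`, then `C x = D U x = 0`, hence
`x ∈ R(C^n)` for all `n`; as `C` commutes with `D`, `C^n = U^n D^n`, so `x ∈ R(U^n)`.

A strongly continuous family on `[0, ∞)` is extended to `ℝ` by `u ↦ S(max u 0)`, so that the lemmas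
below may assume continuity on the whole line.
-/


open MeasureTheory intervalIntegral Pointwise

noncomputable section

/-- `D_λ(t) x = ∫₀ᵗ e^{λ(t−r)} S(r) x dr`. -/
noncomputable def Dop {X : Type*} [NormedAddCommGroup X] [NormedSpace ℂ X]
    (S : ℝ → X →L[ℂ] X) (l : ℂ) (t : ℝ) (x : X) : X :=
  ∫ r in (0:ℝ)..t, Complex.exp (l * ((t - r : ℝ) : ℂ)) • S r x

/-- `c_λ(t) = ∫₀ᵗ e^{λ(t−s)} s^{α−1}/Γ(α) ds`. -/
noncomputable def cConst (α : ℝ) (l : ℂ) (t : ℝ) : ℂ :=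
  ∫ s in (0:ℝ)..t,
    Complex.exp (l * ((t - s : ℝ) : ℂ)) * ((s ^ (α - 1) : ℝ) : ℂ) / ((Real.Gamma α : ℝ) : ℂ)

/-- `L_λ(t) x = ∫₀ᵗ e^{−λs} D_λ(s) x ds`. -/
noncomputable def Lop {X : Type*} [NormedAddCommGroup X] [NormedSpace ℂ X]
    (S : ℝ → X →L[ℂ] X) (l : ℂ) (t : ℝ) (x : X) : X :=
  ∫ s in (0:ℝ)..t, Complex.exp (-l * ((s : ℝ) : ℂ)) • Dop S l s x

/-- `φ_λ(t) = ∫₀ᵗ ∫₀^τ e^{−λr} r^{α−1}/Γ(α) dr dτ`. -/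
noncomputable def phiConst (α : ℝ) (l : ℂ) (t : ℝ) : ℂ :=
  ∫ τ in (0:ℝ)..t, ∫ r in (0:ℝ)..τ,
    Complex.exp (-l * ((r : ℝ) : ℂ)) * ((r ^ (α - 1) : ℝ) : ℂ) / ((Real.Gamma α : ℝ) : ℂ)

/-- Iterated domain `D(A^n)` of the (possibly unbounded) operator given by the map `f = λ − A`
with domain `D`: `D^0 = X`, `D^{n+1} = {x ∈ D | f x ∈ D^n}`. -/
def iterDom {X : Type*} (D : Set X) (f : X → X) : ℕ → Set X
  | 0 => Set.univ
  | n + 1 => {x | x ∈ D ∧ f x ∈ iterDom D f n}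

/-- The bounded operator `c_λ(t)·I − S(t)`. -/
noncomputable def cSop {X : Type*} [NormedAddCommGroup X] [NormedSpace ℂ X]
    (S : ℝ → X →L[ℂ] X) (α : ℝ) (l : ℂ) (t : ℝ) : X →L[ℂ] X :=
  cConst α l t • ContinuousLinearMap.id ℂ X - S t

/-- `D_{λ,n}(t) = Σ_{i=1}^n binom(n,i)·(φ_λ(t))^{n−i}·e^{−iλt}·(−D_λ(t))^{i−1}`. -/
noncomputable def Dln {X : Type*} [NormedAddCommGroup X] [NormedSpace ℂ X]
    (S : ℝ → X →L[ℂ] X) (α : ℝ) (l : ℂ) (t : ℝ) (n : ℕ) (x : X) : X :=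
  ∑ i ∈ Finset.Icc 1 n,
    ((n.choose i : ℂ) * (phiConst α l t) ^ (n - i) * Complex.exp (-(i : ℂ) * l * (t : ℂ))) •
      ((fun y => - Dop S l t y)^[i - 1] x)

/-! ### Operator-valued integrals -/

/-- The pointwise integral of a strongly continuous family is a bounded operator; the bound comes from
the uniform boundedness principle on `[0, t]`. -/
lemma exists_clm_integral {X : Type*} [NormedAddCommGroup X] [NormedSpace ℂ X] [CompleteSpace X]
    (F : ℝ → X →L[ℂ] X) (hF : ∀ x, Continuous fun s => F s x) (t : ℝ) :
    ∃ J : X →L[ℂ] X, ∀ x, J x = ∫ s in (0:ℝ)..t, F s x := by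
  obtain ⟨M, hM⟩ := banach_steinhaus (g := fun s : Set.uIcc (0:ℝ) t => F s) (by
    intro x
    obtain ⟨C, hC⟩ := isCompact_uIcc.exists_bound_of_continuousOn
      (s := Set.uIcc (0:ℝ) t) (hF x).continuousOn
    exact ⟨C, fun i => hC i i.2⟩)
  let J : X →ₗ[ℂ] X :=
    { toFun := fun x => ∫ s in (0:ℝ)..t, F s x
      map_add' := fun x y => by
        simp only [map_add]
        exact intervalIntegral.integral_add ((hF x).intervalIntegrable _ _)
          ((hF y).intervalIntegrable _ _)
      map_smul' := fun c x => by
        simp only [map_smul, RingHom.id_apply]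
        exact intervalIntegral.integral_smul _ _ }
  refine ⟨J.mkContinuous (M * |t - 0|) fun x => ?_, fun x => rfl⟩
  have h := intervalIntegral.norm_integral_le_of_norm_le_const (a := (0:ℝ)) (b := t)
    (f := fun s => F s x) (C := M * ‖x‖) fun s hs =>
      (F s).le_of_opNorm_le (hM ⟨s, Set.uIoc_subset_uIcc hs⟩) x
  calc ‖J x‖ ≤ M * ‖x‖ * |t - 0| := h
    _ = M * |t - 0| * ‖x‖ := by ring

/-- An operator with a bounded resolvent at `μ` is closed, so it passes through integrals: if
`f` takes values in its domain and `A ∘ f = g` with `f`, `g` integrable, then `A ∫ f = ∫ g`. -/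
lemma integral_mem_and_apply {X : Type*} [NormedAddCommGroup X] [NormedSpace ℂ X] [CompleteSpace X]
    (D : Submodule ℂ X) (A : X →ₗ[ℂ] X)
    (hres : ∃ μ : ℂ, ∃ R : X →L[ℂ] X, (∀ x : X, R x ∈ D) ∧
      (∀ x : X, μ • R x - A (R x) = x) ∧ (∀ x ∈ D, R (μ • x - A x) = x))
    {t : ℝ} (ht : 0 ≤ t) (f g : ℝ → X)
    (hf : IntervalIntegrable f volume 0 t) (hg : IntervalIntegrable g volume 0 t)
    (hfD : ∀ s, 0 ≤ s → s ≤ t → f s ∈ D ∧ A (f s) = g s) :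
    (∫ s in (0:ℝ)..t, f s) ∈ D ∧ A (∫ s in (0:ℝ)..t, f s) = ∫ s in (0:ℝ)..t, g s := by
  obtain ⟨μ, R, hRD, hR1, hR2⟩ := hres
  have key : ∫ s in (0:ℝ)..t, f s = R (μ • (∫ s in (0:ℝ)..t, f s) - ∫ s in (0:ℝ)..t, g s) := by
    have hμf : IntervalIntegrable (fun s => μ • f s) volume 0 t := hf.smul μ
    have hsub : IntervalIntegrable (fun s => μ • f s - g s) volume 0 t := hμf.sub hg
    rw [← intervalIntegral.integral_smul, ← intervalIntegral.integral_sub hμf hg,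
      ← R.intervalIntegral_comp_comm hsub]
    refine intervalIntegral.integral_congr fun s hs => ?_
    rw [Set.uIcc_of_le ht] at hs
    obtain ⟨h1, h2⟩ := hfD s hs.1 hs.2
    have := hR2 _ h1
    rw [h2] at this
    exact this.symm
  have hA := hR1 (μ • (∫ s in (0:ℝ)..t, f s) - ∫ s in (0:ℝ)..t, g s)
  rw [← key] at hA
  refine ⟨by rw [key]; exact hRD _, sub_right_injective hA⟩

/-! ### Integration by parts against the exponential -/

lemma continuous_cexp_sub (l : ℂ) (t : ℝ) :
    Continuous fun r : ℝ => Complex.exp (l * ((t - r : ℝ) : ℂ)) := by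
  fun_prop

lemma cexp_sub (l : ℂ) (t r : ℝ) :
    Complex.exp (l * ((t - r : ℝ) : ℂ)) = Complex.exp (l * t) * Complex.exp (-l * (r : ℂ)) := by
  rw [← Complex.exp_add]; congr 1; push_cast; ring

lemma integral_exp_smul_deriv {Y : Type*} [NormedAddCommGroup Y] [NormedSpace ℂ Y] [CompleteSpace Y]
    (l : ℂ) {t : ℝ} (ht : 0 ≤ t) (v v' : ℝ → Y) (hv : ContinuousOn v (Set.Icc 0 t)) (hv0 : v 0 = 0)
    (hvv' : ∀ r ∈ Set.Ioo 0 t, HasDerivAt v (v' r) r) (hv' : IntervalIntegrable v' volume 0 t) :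
    ∫ r in (0:ℝ)..t, Complex.exp (l * ((t - r : ℝ) : ℂ)) • v' r =
      v t + l • ∫ r in (0:ℝ)..t, Complex.exp (l * ((t - r : ℝ) : ℂ)) • v r := by
  have hder : ∀ r : ℝ, HasDerivAt (fun r : ℝ => Complex.exp (l * ((t - r : ℝ) : ℂ)))
      (-l * Complex.exp (l * ((t - r : ℝ) : ℂ))) r := by
    intro r
    have h1 : HasDerivAt (fun r : ℝ => l * ((t - r : ℝ) : ℂ)) (l * ((-1 : ℝ) : ℂ)) r :=
      (((hasDerivAt_id r).const_sub t).ofReal_comp).const_mul l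
    convert h1.cexp using 1
    push_cast; ring
  have := intervalIntegral.integral_smul_deriv_eq_deriv_smul_of_hasDerivAt (a := 0) (b := t)
    (u := fun r : ℝ => Complex.exp (l * ((t - r : ℝ) : ℂ))) (v := v) (v' := v')
    (u' := fun r : ℝ => -l * Complex.exp (l * ((t - r : ℝ) : ℂ)))
    (continuous_cexp_sub l t).continuousOn (by rwa [Set.uIcc_of_le ht])
    (fun r _ => hder r) (by rwa [min_eq_left ht, max_eq_right ht])
    ((continuous_const.mul (continuous_cexp_sub l t)).intervalIntegrable _ _) hv'
  rw [this]
  simp only [hv0, mul_smul, intervalIntegral.integral_smul]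
  simp

/-! ### The scalar functions `c_λ` and `φ_λ` -/

lemma intervalIntegrable_kernel {α : ℝ} (hα : 0 < α) (a b : ℝ) :
    IntervalIntegrable (fun r : ℝ => ((r ^ (α - 1) : ℝ) : ℂ) / ((Real.Gamma α : ℝ) : ℂ))
      volume a b := by
  have h := (intervalIntegral.intervalIntegrable_rpow' (a := a) (b := b)
    (r := α - 1) (by linarith))
  have h' : IntervalIntegrable (fun r : ℝ => ((r ^ (α - 1) : ℝ) : ℂ)) volume a b :=
    ⟨h.1.ofReal, h.2.ofReal⟩
  exact h'.div_const _

lemma cConst_eq {α : ℝ} (hα : 0 < α) (l : ℂ) {t : ℝ} (ht : 0 ≤ t) :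
    cConst α l t = ((t ^ α : ℝ) : ℂ) / ((Real.Gamma (α + 1) : ℝ) : ℂ) +
      l • ∫ r in (0:ℝ)..t, Complex.exp (l * ((t - r : ℝ) : ℂ)) •
        (((r ^ α : ℝ) : ℂ) / ((Real.Gamma (α + 1) : ℝ) : ℂ)) := by
  have hc : Continuous fun r : ℝ => ((r ^ α : ℝ) : ℂ) / ((Real.Gamma (α + 1) : ℝ) : ℂ) :=
    (Complex.continuous_ofReal.comp (Real.continuous_rpow_const hα.le)).div_const _
  rw [← integral_exp_smul_deriv l ht _
    (fun r : ℝ => ((r ^ (α - 1) : ℝ) : ℂ) / ((Real.Gamma α : ℝ) : ℂ)) hc.continuousOn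
    (by simp [Real.zero_rpow hα.ne']) ?_ (intervalIntegrable_kernel hα _ _)]
  · simp only [cConst, smul_eq_mul, mul_div_assoc]
  · intro r hr
    have h := ((Real.hasDerivAt_rpow_const (x := r) (p := α) (Or.inl hr.1.ne')).ofReal_comp).div_const
      ((Real.Gamma (α + 1) : ℝ) : ℂ)
    have hG : ((Real.Gamma α : ℝ) : ℂ) ≠ 0 := by
      exact_mod_cast (Real.Gamma_pos_of_pos hα).ne'
    have hα' : (α : ℂ) ≠ 0 := by exact_mod_cast hα.ne'
    have heq : ((α * r ^ (α - 1) : ℝ) : ℂ) / ((Real.Gamma (α + 1) : ℝ) : ℂ) =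
        ((r ^ (α - 1) : ℝ) : ℂ) / ((Real.Gamma α : ℝ) : ℂ) := by
      rw [Real.Gamma_add_one hα.ne']
      push_cast
      field_simp
    rw [heq] at h
    exact h

/-- The inner integral of `φ_λ`, namely `∫₀^s e^{−λr} r^{α−1}/Γ(α) dr`, equals `e^{−λs} c_λ(s)`. -/
lemma exp_mul_cConst (α : ℝ) (l : ℂ) (s : ℝ) :
    ∫ r in (0:ℝ)..s, Complex.exp (-l * ((r : ℝ) : ℂ)) * ((r ^ (α - 1) : ℝ) : ℂ) /
      ((Real.Gamma α : ℝ) : ℂ) = Complex.exp (-l * (s : ℂ)) * cConst α l s := by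
  rw [cConst, ← intervalIntegral.integral_const_mul]
  refine intervalIntegral.integral_congr fun r _ => ?_
  simp only [cexp_sub]
  have : Complex.exp (-l * (s : ℂ)) * Complex.exp (l * s) = 1 := by
    rw [← Complex.exp_add]; simp
  linear_combination (-Complex.exp (-l * ((r : ℝ) : ℂ)) * ((r ^ (α - 1) : ℝ) : ℂ) /
    ((Real.Gamma α : ℝ) : ℂ)) * this

lemma continuous_exp_mul_cConst {α : ℝ} (hα : 0 < α) (l : ℂ) :
    Continuous fun s : ℝ => Complex.exp (-l * (s : ℂ)) * cConst α l s := by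
  simp only [← exp_mul_cConst, mul_div_assoc]
  exact intervalIntegral.continuous_primitive (fun a b =>
    (intervalIntegrable_kernel hα a b).continuousOn_mul (by fun_prop)) 0

/-! ### The operators `D_λ(t)` and `L_λ(t)` -/

lemma exp_smul_Dop {X : Type*} [NormedAddCommGroup X] [NormedSpace ℂ X]
    (S : ℝ → X →L[ℂ] X) (l : ℂ) (s : ℝ) (x : X) :
    Complex.exp (-l * (s : ℂ)) • Dop S l s x =
      ∫ r in (0:ℝ)..s, Complex.exp (-l * (r : ℂ)) • S r x := by
  rw [Dop, ← intervalIntegral.integral_smul]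
  refine intervalIntegral.integral_congr fun r _ => ?_
  simp only [cexp_sub, smul_smul]
  rw [← mul_assoc, ← Complex.exp_add]; simp

lemma continuous_exp_smul_Dop {X : Type*} [NormedAddCommGroup X] [NormedSpace ℂ X]
    (S : ℝ → X →L[ℂ] X) (hS : ∀ x, Continuous fun u => S u x) (l : ℂ) (x : X) :
    Continuous fun s : ℝ => Complex.exp (-l * (s : ℂ)) • Dop S l s x := by
  simp only [exp_smul_Dop]
  have := hS x
  exact intervalIntegral.continuous_primitive (fun a b =>
    (Continuous.intervalIntegrable (by fun_prop) a b)) 0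

lemma exists_clm_Dop {X : Type*} [NormedAddCommGroup X] [NormedSpace ℂ X] [CompleteSpace X]
    (S : ℝ → X →L[ℂ] X) (hS : ∀ x, Continuous fun u => S u x) (l : ℂ) (t : ℝ) :
    ∃ J : X →L[ℂ] X, ∀ x, J x = Dop S l t x :=
  exists_clm_integral (fun r => Complex.exp (l * ((t - r : ℝ) : ℂ)) • S r)
    (fun x => (continuous_cexp_sub l t).smul (hS x)) t

lemma exists_clm_Lop {X : Type*} [NormedAddCommGroup X] [NormedSpace ℂ X] [CompleteSpace X]
    (S : ℝ → X →L[ℂ] X) (hS : ∀ x, Continuous fun u => S u x) (l : ℂ) (t : ℝ) :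
    ∃ J : X →L[ℂ] X, ∀ x, J x = Lop S l t x := by
  choose K hK using exists_clm_Dop S hS l
  obtain ⟨J, hJ⟩ := exists_clm_integral (fun s : ℝ => Complex.exp (-l * (s : ℂ)) • K s)
    (fun x => by simpa [hK] using continuous_exp_smul_Dop S hS l x) t
  exact ⟨J, fun x => by simp [hJ, hK, Lop]⟩

/-- `(λ − A) D_λ(t) = c_λ(t) − S(t)` on all of `X`. -/
lemma Dop_mem_and_apply {X : Type*} [NormedAddCommGroup X] [NormedSpace ℂ X] [CompleteSpace X]
    {α : ℝ} (hα : 0 < α) (D : Submodule ℂ X) (A : X →ₗ[ℂ] X) (S : ℝ → X →L[ℂ] X)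
    (hS : ∀ x, Continuous fun u => S u x)
    (hres : ∃ μ : ℂ, ∃ R : X →L[ℂ] X, (∀ x : X, R x ∈ D) ∧
      (∀ x : X, μ • R x - A (R x) = x) ∧ (∀ x ∈ D, R (μ • x - A x) = x))
    (hint : ∀ u : ℝ, 0 ≤ u → ∀ x : X, (∫ s in (0:ℝ)..u, S s x) ∈ D ∧
      A (∫ s in (0:ℝ)..u, S s x) =
        S u x - (((u ^ α : ℝ) : ℂ) / ((Real.Gamma (α + 1) : ℝ) : ℂ)) • x)
    (l : ℂ) {t : ℝ} (ht : 0 ≤ t) (x : X) :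
    Dop S l t x ∈ D ∧ l • Dop S l t x - A (Dop S l t x) = cSop S α l t x := by
  set E : ℝ → X := fun u => ∫ s in (0:ℝ)..u, S s x with hE
  have hEd : ∀ u, HasDerivAt E (S u x) u := fun u =>
    ((hS x).integral_hasStrictDerivAt 0 u).hasDerivAt
  have hEc : Continuous E := continuous_iff_continuousAt.2 fun u => (hEd u).continuousAt
  have hw := continuous_cexp_sub l t
  have hp : Continuous fun r : ℝ => ((r ^ α : ℝ) : ℂ) / ((Real.Gamma (α + 1) : ℝ) : ℂ) :=
    (Complex.continuous_ofReal.comp (Real.continuous_rpow_const hα.le)).div_const _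
  have hDop : Dop S l t x = E t + l • ∫ r in (0:ℝ)..t, Complex.exp (l * ((t - r : ℝ) : ℂ)) • E r :=
    integral_exp_smul_deriv l ht E (fun r => S r x) hEc.continuousOn (by simp [hE])
      (fun r _ => hEd r) ((hS x).intervalIntegrable _ _)
  obtain ⟨h1, h2⟩ := integral_mem_and_apply D A hres ht
    (fun r => Complex.exp (l * ((t - r : ℝ) : ℂ)) • E r)
    (fun r => Complex.exp (l * ((t - r : ℝ) : ℂ)) • S r x -
      (Complex.exp (l * ((t - r : ℝ) : ℂ)) •
        (((r ^ α : ℝ) : ℂ) / ((Real.Gamma (α + 1) : ℝ) : ℂ))) • x)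
    ((hw.smul hEc).intervalIntegrable _ _)
    (((hw.smul (hS x)).sub ((hw.smul hp).smul continuous_const)).intervalIntegrable _ _)
    (fun r hr _ => ⟨D.smul_mem _ (hint r hr x).1, by
      rw [map_smul, hE, (hint r hr x).2, smul_sub, smul_assoc]⟩)
  obtain ⟨h3, h4⟩ := hint t ht x
  refine ⟨by rw [hDop]; exact D.add_mem h3 (D.smul_mem _ h1), ?_⟩
  have hi1 : IntervalIntegrable (fun r => Complex.exp (l * ((t - r : ℝ) : ℂ)) • S r x)
      volume 0 t := (hw.smul (hS x)).intervalIntegrable _ _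
  have hi2 : IntervalIntegrable (fun r => (Complex.exp (l * ((t - r : ℝ) : ℂ)) •
      (((r ^ α : ℝ) : ℂ) / ((Real.Gamma (α + 1) : ℝ) : ℂ))) • x) volume 0 t :=
    ((hw.smul hp).smul continuous_const).intervalIntegrable _ _
  rw [intervalIntegral.integral_sub hi1 hi2, intervalIntegral.integral_smul_const] at h2
  have hA : A (Dop S l t x) = A (E t) +
      l • A (∫ r in (0:ℝ)..t, Complex.exp (l * ((t - r : ℝ) : ℂ)) • E r) := by
    rw [hDop, map_add, map_smul]
  rw [hA, h2, hE, h4, ← Dop]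
  simp only [cSop, sub_apply, smul_apply,
    ContinuousLinearMap.id_apply, cConst_eq hα l ht]
  module

/-- `D_λ(t) (λ − A) = c_λ(t) − S(t)` on `D(A)`. -/
lemma Dop_apply_sub {X : Type*} [NormedAddCommGroup X] [NormedSpace ℂ X] [CompleteSpace X]
    {α : ℝ} (hα : 0 < α) (D : Submodule ℂ X) (A : X →ₗ[ℂ] X) (S : ℝ → X →L[ℂ] X)
    (hS : ∀ x, Continuous fun u => S u x)
    (hres : ∃ μ : ℂ, ∃ R : X →L[ℂ] X, (∀ x : X, R x ∈ D) ∧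
      (∀ x : X, μ • R x - A (R x) = x) ∧ (∀ x ∈ D, R (μ • x - A x) = x))
    (hcomA : ∀ u : ℝ, 0 ≤ u → ∀ x ∈ D, S u x ∈ D ∧ A (S u x) = S u (A x))
    (hint : ∀ u : ℝ, 0 ≤ u → ∀ x : X, (∫ s in (0:ℝ)..u, S s x) ∈ D ∧
      A (∫ s in (0:ℝ)..u, S s x) =
        S u x - (((u ^ α : ℝ) : ℂ) / ((Real.Gamma (α + 1) : ℝ) : ℂ)) • x)
    (l : ℂ) {t : ℝ} (ht : 0 ≤ t) (x : X) (hx : x ∈ D) :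
    Dop S l t (l • x - A x) = cSop S α l t x := by
  have hw := continuous_cexp_sub l t
  rw [← (Dop_mem_and_apply hα D A S hS hres hint l ht x).2]
  have h : A (Dop S l t x) = Dop S l t (A x) :=
    (integral_mem_and_apply D A hres ht
      (fun r => Complex.exp (l * ((t - r : ℝ) : ℂ)) • S r x)
      (fun r => Complex.exp (l * ((t - r : ℝ) : ℂ)) • S r (A x))
      ((hw.smul (hS x)).intervalIntegrable _ _) ((hw.smul (hS (A x))).intervalIntegrable _ _)
      (fun r hr _ => ⟨D.smul_mem _ (hcomA r hr x hx).1, by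
        rw [map_smul, (hcomA r hr x hx).2]⟩)).2
  obtain ⟨J, hJ⟩ := exists_clm_Dop S hS l t
  rw [h, ← hJ, ← hJ, ← hJ, map_sub, map_smul]

/-- `(λ − A) L_λ(t) + e^{−λt} D_λ(t) = φ_λ(t)` on all of `X`. -/
lemma Lop_mem_and_apply {X : Type*} [NormedAddCommGroup X] [NormedSpace ℂ X] [CompleteSpace X]
    {α : ℝ} (hα : 0 < α) (D : Submodule ℂ X) (A : X →ₗ[ℂ] X) (S : ℝ → X →L[ℂ] X)
    (hS : ∀ x, Continuous fun u => S u x)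
    (hres : ∃ μ : ℂ, ∃ R : X →L[ℂ] X, (∀ x : X, R x ∈ D) ∧
      (∀ x : X, μ • R x - A (R x) = x) ∧ (∀ x ∈ D, R (μ • x - A x) = x))
    (hint : ∀ u : ℝ, 0 ≤ u → ∀ x : X, (∫ s in (0:ℝ)..u, S s x) ∈ D ∧
      A (∫ s in (0:ℝ)..u, S s x) =
        S u x - (((u ^ α : ℝ) : ℂ) / ((Real.Gamma (α + 1) : ℝ) : ℂ)) • x)
    (l : ℂ) {t : ℝ} (ht : 0 ≤ t) (x : X) :
    Lop S l t x ∈ D ∧ l • Lop S l t x - A (Lop S l t x) +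
      Complex.exp (-l * (t : ℂ)) • Dop S l t x = phiConst α l t • x := by
  have hd := continuous_exp_smul_Dop S hS l x
  have hc := continuous_exp_mul_cConst hα l
  have hs : Continuous fun s : ℝ => Complex.exp (-l * (s : ℂ)) • S s x := by
    have := hS x
    fun_prop
  obtain ⟨h1, h2⟩ := integral_mem_and_apply D A hres ht
    (fun s : ℝ => Complex.exp (-l * (s : ℂ)) • Dop S l s x)
    (fun s : ℝ => l • (Complex.exp (-l * (s : ℂ)) • Dop S l s x) -
      ((Complex.exp (-l * (s : ℂ)) * cConst α l s) • x - Complex.exp (-l * (s : ℂ)) • S s x))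
    (hd.intervalIntegrable _ _)
    (((hd.const_smul l).sub ((hc.smul continuous_const).sub hs)).intervalIntegrable _ _)
    (fun s hs0 _ => by
      obtain ⟨hm, he⟩ := Dop_mem_and_apply hα D A S hS hres hint l hs0 x
      refine ⟨D.smul_mem _ hm, ?_⟩
      rw [map_smul, ← sub_sub_self (l • Dop S l s x) (A (Dop S l s x)), he]
      simp only [cSop, sub_apply, smul_apply,
        ContinuousLinearMap.id_apply]
      module)
  refine ⟨h1, ?_⟩
  have hi1 : IntervalIntegrable (fun s : ℝ => l • (Complex.exp (-l * (s : ℂ)) • Dop S l s x))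
      volume 0 t := (hd.const_smul l).intervalIntegrable _ _
  have hi2 : IntervalIntegrable (fun s : ℝ => (Complex.exp (-l * (s : ℂ)) * cConst α l s) • x)
      volume 0 t := (hc.smul continuous_const).intervalIntegrable _ _
  have hi3 := hs.intervalIntegrable (μ := volume) 0 t
  rw [intervalIntegral.integral_sub hi1 (hi2.sub hi3), intervalIntegral.integral_sub hi2 hi3,
    intervalIntegral.integral_smul,
    intervalIntegral.integral_smul_const, ← exp_smul_Dop] at h2
  simp only [← exp_mul_cConst] at h2
  rw [← phiConst] at h2
  simp only [Lop]
  rw [h2]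
  module

lemma Dop_comm {X : Type*} [NormedAddCommGroup X] [NormedSpace ℂ X] [CompleteSpace X]
    (S : ℝ → X →L[ℂ] X) (hS : ∀ x, Continuous fun u => S u x)
    (hcomm : ∀ u v : ℝ, 0 ≤ u → 0 ≤ v → ∀ x : X, S u (S v x) = S v (S u x))
    (l : ℂ) {t : ℝ} (ht : 0 ≤ t) (x : X) : Dop S l t (S t x) = S t (Dop S l t x) := by
  have hi : IntervalIntegrable (fun r => Complex.exp (l * ((t - r : ℝ) : ℂ)) • S r x) volume 0 t :=
    ((continuous_cexp_sub l t).smul (hS x)).intervalIntegrable _ _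
  rw [Dop, Dop, ← (S t).intervalIntegral_comp_comm hi]
  refine intervalIntegral.integral_congr fun r hr => ?_
  rw [Set.uIcc_of_le ht] at hr
  simp only [map_smul]
  rw [hcomm r t hr.1 ht]

/-! ### Algebra of powers and the Saphar property -/

/-- If `U K = C` and `K` commutes with `C`, then `K^n` maps into `D(U^n)` and `U^n K^n = C^n`. -/
lemma iterate_apply_pow {X : Type*} [NormedAddCommGroup X] [NormedSpace ℂ X]
    (D : Set X) (U : X → X) (K C : X →L[ℂ] X) (hKD : ∀ x, K x ∈ D) (hUK : ∀ x, U (K x) = C x)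
    (hKC : Commute K C) (n : ℕ) :
    ∀ z, (K ^ n) z ∈ iterDom D U n ∧ U^[n] ((K ^ n) z) = (C ^ n) z := by
  induction n with
  | zero => intro z; simp [iterDom]
  | succ n ih =>
    intro z
    have hU : U ((K ^ (n + 1)) z) = (K ^ n) (C z) := by
      rw [pow_succ', mul_apply_eq_comp, hUK, ← mul_apply_eq_comp,
        ← mul_apply_eq_comp, (hKC.pow_left n).eq]
    refine ⟨⟨?_, ?_⟩, ?_⟩
    · rw [pow_succ', mul_apply_eq_comp]; exact hKD _
    · rw [hU]; exact (ih (C z)).1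
    · rw [Function.iterate_succ_apply, hU, (ih (C z)).2, pow_succ, mul_apply_eq_comp]

/-- The theorem for a family that is strongly continuous on all of `ℝ`. -/
lemma saphar_of_continuous {X : Type*} [NormedAddCommGroup X] [NormedSpace ℂ X] [CompleteSpace X]
    {α : ℝ} (hα : 0 < α) (D : Submodule ℂ X) (A : X →ₗ[ℂ] X) (S : ℝ → X →L[ℂ] X)
    (hS : ∀ x, Continuous fun u => S u x)
    (hcomm : ∀ u v : ℝ, 0 ≤ u → 0 ≤ v → ∀ x : X, S u (S v x) = S v (S u x))
    (hres : ∃ μ : ℂ, ∃ R : X →L[ℂ] X, (∀ x : X, R x ∈ D) ∧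
      (∀ x : X, μ • R x - A (R x) = x) ∧ (∀ x ∈ D, R (μ • x - A x) = x))
    (hcomA : ∀ u : ℝ, 0 ≤ u → ∀ x ∈ D, S u x ∈ D ∧ A (S u x) = S u (A x))
    (hint : ∀ u : ℝ, 0 ≤ u → ∀ x : X, (∫ s in (0:ℝ)..u, S s x) ∈ D ∧
      A (∫ s in (0:ℝ)..u, S s x) =
        S u x - (((u ^ α : ℝ) : ℂ) / ((Real.Gamma (α + 1) : ℝ) : ℂ)) • x)
    (l : ℂ) {t : ℝ} (ht : 0 ≤ t) (hphi : phiConst α l t ≠ 0)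
    (hreg : ∃ T : X →L[ℂ] X,
      (cSop S α l t).comp (T.comp (cSop S α l t)) = cSop S α l t)
    (hker : ∀ x : X, cSop S α l t x = 0 →
      ∀ n : ℕ, 1 ≤ n → x ∈ Set.range ⇑(cSop S α l t ^ n)) :
    (∃ B : X →L[ℂ] X, (∀ x : X, B x ∈ D) ∧
      ∀ x ∈ D, l • B (l • x - A x) - A (B (l • x - A x)) = l • x - A x) ∧
      ∀ x ∈ D, l • x - A x = 0 → ∀ n : ℕ, 1 ≤ n →
        x ∈ (fun y => l • y - A y)^[n] '' iterDom (D : Set X) (fun y => l • y - A y) n := by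
  obtain ⟨K, hK⟩ := exists_clm_Dop S hS l t
  obtain ⟨L, hL⟩ := exists_clm_Lop S hS l t
  have hK1 : ∀ x, K x ∈ D ∧ l • K x - A (K x) = cSop S α l t x := fun x => by
    rw [hK]; exact Dop_mem_and_apply hα D A S hS hres hint l ht x
  have hK2 : ∀ x ∈ D, K (l • x - A x) = cSop S α l t x := fun x hx => by
    rw [hK]; exact Dop_apply_sub hα D A S hS hres hcomA hint l ht x hx
  have hL1 : ∀ x, L x ∈ D ∧ l • L x - A (L x) + Complex.exp (-l * (t : ℂ)) • K x =
      phiConst α l t • x := fun x => by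
    rw [hL, hK]; exact Lop_mem_and_apply hα D A S hS hres hint l ht x
  have hKC : Commute K (cSop S α l t) := by
    ext x
    have h : K (S t x) = S t (K x) := by rw [hK, hK]; exact Dop_comm S hS hcomm l ht x
    simp [cSop, h]
  constructor
  · obtain ⟨T, hT⟩ := hreg
    refine ⟨(phiConst α l t)⁻¹ • (L + Complex.exp (-l * (t : ℂ)) • K.comp (T.comp K)),
      fun x => D.smul_mem _ (D.add_mem (hL1 x).1 (D.smul_mem _ (hK1 _).1)), fun x hx => ?_⟩
    set y := l • x - A x with hy
    have h1 := (hL1 y).2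
    have h2 := (hK1 (T (K y))).2
    have h3 : cSop S α l t (T (K y)) = K y := by
      rw [hy, hK2 x hx]; exact DFunLike.congr_fun hT x
    rw [h3] at h2
    simp only [smul_apply, add_apply,
      ContinuousLinearMap.comp_apply, map_smul, map_add]
    have h4 : y = (phiConst α l t)⁻¹ • (phiConst α l t • y) := by
      rw [smul_smul, inv_mul_cancel₀ hphi, one_smul]
    conv_rhs => rw [h4, ← h1, ← h2]
    module
  · intro x hx hx0 n hn
    have hC : cSop S α l t x = 0 := by rw [← hK2 x hx, hx0, map_zero]
    obtain ⟨z, hz⟩ := hker x hC n hn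
    obtain ⟨h1, h2⟩ := iterate_apply_pow (D : Set X) (fun y => l • y - A y) K (cSop S α l t)
      (fun x => (hK1 x).1) (fun x => (hK1 x).2) hKC n z
    exact ⟨_, h1, h2.trans hz⟩

theorem stmt_11
    {X : Type*} [NormedAddCommGroup X] [NormedSpace ℂ X] [CompleteSpace X]
    (α : ℝ) (hα : 0 < α)
    (D : Submodule ℂ X) (A : X →ₗ[ℂ] X)
    (S : ℝ → X →L[ℂ] X)
    (hcont : ∀ x : X, ContinuousOn (fun u : ℝ => S u x) (Set.Ici (0:ℝ)))
    (hcomm : ∀ u v : ℝ, 0 ≤ u → 0 ≤ v → ∀ x : X, S u (S v x) = S v (S u x))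
    (hres : ∃ μ : ℂ, ∃ R : X →L[ℂ] X, (∀ x : X, R x ∈ D) ∧
      (∀ x : X, μ • R x - A (R x) = x) ∧ (∀ x ∈ D, R (μ • x - A x) = x))
    (hdom : ∀ u : ℝ, 0 ≤ u → ∀ x ∈ D, S u x ∈ D ∧ A (S u x) = S u (A x) ∧
      S u x = (((u ^ α : ℝ) : ℂ) / ((Real.Gamma (α + 1) : ℝ) : ℂ)) • x +
        ∫ s in (0:ℝ)..u, S s (A x))
    (hint : ∀ u : ℝ, 0 ≤ u → ∀ x : X, (∫ s in (0:ℝ)..u, S s x) ∈ D ∧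
      A (∫ s in (0:ℝ)..u, S s x) =
        S u x - (((u ^ α : ℝ) : ℂ) / ((Real.Gamma (α + 1) : ℝ) : ℂ)) • x)
    (l : ℂ) (t : ℝ)
    (ht : 0 < t) (hphi : phiConst α l t ≠ 0)
    (hreg : ∃ T : X →L[ℂ] X,
      (cSop S α l t).comp (T.comp (cSop S α l t)) = cSop S α l t)
    (hker : ∀ x : X, cSop S α l t x = 0 →
      ∀ n : ℕ, 1 ≤ n → x ∈ Set.range ⇑(cSop S α l t ^ n)) :
    (∃ B : X →L[ℂ] X, (∀ x : X, B x ∈ D) ∧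
      ∀ x ∈ D, l • B (l • x - A x) - A (B (l • x - A x)) = l • x - A x) ∧
      ∀ x ∈ D, l • x - A x = 0 → ∀ n : ℕ, 1 ≤ n →
        x ∈ (fun y => l • y - A y)^[n] '' iterDom (D : Set X) (fun y => l • y - A y) n := by
  have hS' : ∀ u, 0 ≤ u → S (max u 0) = S u := fun u hu => by rw [max_eq_left hu]
  have hc : cSop (fun u => S (max u 0)) α l t = cSop S α l t := by simp only [cSop, hS' t ht.le]
  have hI : ∀ u, 0 ≤ u → ∀ x, ∫ s in (0:ℝ)..u, S (max s 0) x = ∫ s in (0:ℝ)..u, S s x := by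
    intro u hu x
    refine intervalIntegral.integral_congr fun s hs => ?_
    rw [Set.uIcc_of_le hu] at hs
    simp only [hS' s hs.1]
  refine saphar_of_continuous hα D A (fun u => S (max u 0)) (fun x => ?_) ?_ hres ?_ ?_ l ht.le hphi
    (by rwa [hc]) (by rwa [hc])
  · exact (hcont x).comp_continuous (continuous_id.max continuous_const) fun u => le_max_right u 0
  · intro u v _ _ x
    exact hcomm _ _ (le_max_right u 0) (le_max_right v 0) x
  · intro u _ x hx
    exact ⟨(hdom _ (le_max_right u 0) x hx).1, (hdom _ (le_max_right u 0) x hx).2.1⟩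
  · intro u hu x
    rw [hI u hu x, hS' u hu]
    exact hint u hu x
end
end

section
/- (Essentially Saphar spectrum inclusion) Let λ ∈ ℂ and t > 0 with φ_λ(t) ≠ 0. If the bounded operator c_λ(t)·I − S(t) is essentially Saphar, i.e. it is relatively regular (there is a bounded T with (c_λ(t)·I − S(t))T(c_λ(t)·I − S(t)) = c_λ(t)·I − S(t)) and N(c_λ(t)·I − S(t)) ⊆_e R^∞(c_λ(t)·I − S(t)), then λ − A is essentially Saphar: there exists a bounded operator B on X mapping X into D(A) with (λ − A)B(λ − A)x = (λ − A)x for all x ∈ D(A), and N(λ − A) ⊆_e R^∞(λ − A). -/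
/-!
Write `P = λ - A` and `Q = c_λ(t) I - S(t)`.  Put `W(u) x = ∫₀ᵘ e^{-λr} S(r) x dr`, so that
`D_λ(u) = e^{λu} W(u)`, and `p(u) = ∫₀ᵘ e^{-λr} r^{α-1}/Γ(α) dr`.  Integration by parts together
with the closedness of `A` gives `P W(u) x = p(u) x - e^{-λu} S(u) x` (`resolvent_weighted`); at
`u = t`, after multiplication by `e^{λt}`, this is `P D_λ(t) = Q`.  Integrating over `u ∈ [0, t]`
gives `P L = φ_λ(t) I - e^{-λt} D_λ(t)` for the bounded operator `L = ∫₀ᵗ W(u) du`.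

The rest is algebra (`saphar_of_factorization`).  Write `E = D_λ(t)`, so `P E = Q` on `X` and
`E P = Q` on `D(A)`.  For `x ∈ D(A)`, the identity for `L` applied to `P x` gives
`φ P x = P L P x + e^{-λt} Q x`; if `Q T Q = Q`, then `Q x = P E T E P x`, so
`B = φ⁻¹ (L + e^{-λt} E T E)` satisfies `P B P = P`.  Moreover `N(P) ⊆ N(Q)` because `E P = Q` on
`D(A)`, and `R(Q^n) ⊆ R(P^n)` because `Q^n = P^n E^n`; hence the same finite-dimensional subspace
witnesses the essential inclusion for `P`.
-/

open MeasureTheory intervalIntegral Pointwise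

noncomputable section

/-! ### Operator algebra -/

section Algebra

variable {X : Type*} [NormedAddCommGroup X] [NormedSpace ℂ X]

/-- `Q^n = P^n E^n`, including the statement that `E^n` maps into the domain of `P^n`. -/
theorem iterate_factor (D : Submodule ℂ X) (P : X → X) (E Q : X →L[ℂ] X)
    (hE : ∀ x, E x ∈ D ∧ P (E x) = Q x) (hEQ : ∀ x, E (Q x) = Q (E x)) (n : ℕ) :
    ∀ w : X, (E ^ n) w ∈ iterDom (D : Set X) P n ∧ P^[n] ((E ^ n) w) = (Q ^ n) w := by
  have hcm : Commute E Q := by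
    ext x
    exact hEQ x
  induction n with
  | zero => intro w; simp [iterDom]
  | succ n ih =>
    intro w
    have hP : P ((E ^ (n + 1)) w) = (E ^ n) (Q w) := by
      rw [pow_succ', mul_apply_eq_comp, (hE _).2]
      exact (congrArg (fun f : X →L[ℂ] X => f w) (hcm.pow_left n).eq).symm
    refine ⟨⟨?_, ?_⟩, ?_⟩
    · rw [pow_succ', mul_apply_eq_comp]
      exact (hE _).1
    · rw [hP]
      exact (ih _).1
    · rw [Function.iterate_succ_apply, hP, (ih _).2, pow_succ, mul_apply_eq_comp]

/-- The algebraic core: the essential Saphar property passes from `Q` to `P = l - A` whenever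
`Q` factors through `P` by a bounded `E` and `P L + k E = φ I` with `φ ≠ 0`. -/
theorem saphar_of_factorization (D : Submodule ℂ X) (A : X →ₗ[ℂ] X) (l φ k : ℂ) (hφ : φ ≠ 0)
    (E L Q : X →L[ℂ] X)
    (hE : ∀ x, E x ∈ D ∧ l • E x - A (E x) = Q x)
    (hEP : ∀ x ∈ D, E (l • x - A x) = Q x)
    (hEQ : ∀ x, E (Q x) = Q (E x))
    (hL : ∀ x, L x ∈ D ∧ l • L x - A (L x) = φ • x - k • E x)
    (hreg : ∃ T : X →L[ℂ] X, Q.comp (T.comp Q) = Q)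
    (hker : ∃ F : Submodule ℂ X, FiniteDimensional ℂ F ∧
      ∀ x : X, Q x = 0 → ∃ y : X, (∀ n : ℕ, 1 ≤ n → y ∈ Set.range ⇑(Q ^ n)) ∧
          ∃ z ∈ F, x = y + z) :
    (∃ B : X →L[ℂ] X, (∀ x : X, B x ∈ D) ∧
      ∀ x ∈ D, l • B (l • x - A x) - A (B (l • x - A x)) = l • x - A x) ∧
      ∃ F : Submodule ℂ X, FiniteDimensional ℂ F ∧
        ∀ x ∈ D, l • x - A x = 0 →
          ∃ y : X, (∀ n : ℕ, 1 ≤ n →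
              y ∈ (fun w => l • w - A w)^[n] '' iterDom (D : Set X) (fun w => l • w - A w) n) ∧
            ∃ z ∈ F, x = y + z := by
  obtain ⟨T, hT⟩ := hreg
  obtain ⟨F, hF, hFk⟩ := hker
  constructor
  · refine ⟨φ⁻¹ • (L + k • (E.comp (T.comp E))), fun x => ?_, fun x hx => ?_⟩
    · exact D.smul_mem _ (D.add_mem (hL x).1 (D.smul_mem _ (hE _).1))
    · have hQ : Q (T (Q x)) = Q x := congrArg (fun f : X →L[ℂ] X => f x) hT
      have h1 := (hL (l • x - A x)).2
      have h2 := (hE (T (E (l • x - A x)))).2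
      rw [hEP x hx] at h1 h2
      rw [hQ] at h2
      simp only [smul_apply, add_apply,
        ContinuousLinearMap.comp_apply, map_smul, map_add]
      rw [hEP x hx]
      calc _ = φ⁻¹ • ((l • L (l • x - A x) - A (L (l • x - A x))) +
                k • (l • E (T (Q x)) - A (E (T (Q x))))) := by module
        _ = φ⁻¹ • (φ • (l • x - A x)) := by rw [h1, h2]; congr 1; abel
        _ = _ := inv_smul_smul₀ hφ _
  · refine ⟨F, hF, fun x hx hPx => ?_⟩
    obtain ⟨y, hy, z, hz, hxyz⟩ := hFk x (by rw [← hEP x hx, hPx, map_zero])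
    refine ⟨y, fun n hn => ?_, z, hz, hxyz⟩
    obtain ⟨w, rfl⟩ := hy n hn
    have := iterate_factor D (fun w => l • w - A w) E Q hE hEQ n w
    exact ⟨_, this.1, this.2⟩

end Algebra

/-! ### Vector-valued integrals and integration by parts -/

section Integrals

theorem continuousOn_primitive_Icc {X : Type*} [NormedAddCommGroup X] [NormedSpace ℂ X]
    {u : ℝ} (hu : 0 ≤ u) {f : ℝ → X}
    (hf : ContinuousOn f (Set.Icc 0 u)) :
    ContinuousOn (fun s => ∫ r in (0:ℝ)..s, f r) (Set.Icc 0 u) := by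
  have h := intervalIntegral.continuousOn_primitive_interval (f := f) (μ := volume)
    (a := 0) (b := u) (by
      rw [Set.uIcc_of_le hu]
      exact hf.integrableOn_Icc)
  rwa [Set.uIcc_of_le hu] at h

variable {X : Type*} [NormedAddCommGroup X] [NormedSpace ℂ X] [CompleteSpace X]

/-- Closedness of `A`, in the form of interchange with integrals; it is obtained from the
resolvent `R` through `f = R (μ f - A f)`. -/
theorem closed_integral (D : Submodule ℂ X) (A : X →ₗ[ℂ] X) (μ : ℂ) (R : X →L[ℂ] X)
    (hR1 : ∀ x : X, R x ∈ D) (hR2 : ∀ x : X, μ • R x - A (R x) = x)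
    (hR3 : ∀ x ∈ D, R (μ • x - A x) = x) {u : ℝ} (hu : 0 ≤ u) (f g : ℝ → X)
    (hf : ContinuousOn f (Set.Icc 0 u)) (hg : ContinuousOn g (Set.Icc 0 u))
    (hfD : ∀ s ∈ Set.Icc 0 u, f s ∈ D ∧ A (f s) = g s) :
    (∫ s in (0:ℝ)..u, f s) ∈ D ∧ A (∫ s in (0:ℝ)..u, f s) = ∫ s in (0:ℝ)..u, g s := by
  have hfi := hf.intervalIntegrable_of_Icc (μ := volume) hu
  have hgi := hg.intervalIntegrable_of_Icc (μ := volume) hu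
  have hfi' : IntervalIntegrable (fun s => μ • f s) volume 0 u := hfi.smul μ
  have key : (∫ s in (0:ℝ)..u, f s) = R (μ • (∫ s in (0:ℝ)..u, f s) - ∫ s in (0:ℝ)..u, g s) := by
    rw [← intervalIntegral.integral_smul, ← intervalIntegral.integral_sub hfi' hgi,
      ← R.intervalIntegral_comp_comm (hfi'.sub hgi)]
    refine intervalIntegral.integral_congr fun s hs => ?_
    rw [Set.uIcc_of_le hu] at hs
    have h := hR3 _ (hfD s hs).1
    rw [(hfD s hs).2] at h
    exact h.symm
  refine ⟨key ▸ hR1 _, ?_⟩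
  have h := hR2 (μ • (∫ s in (0:ℝ)..u, f s) - ∫ s in (0:ℝ)..u, g s)
  rw [← key] at h
  exact sub_right_injective h

/-- The pointwise integral of a strongly continuous family over a compact interval is a bounded
operator, by the uniform boundedness principle. -/
theorem exists_clm_integral_s13 {u : ℝ} (hu : 0 ≤ u) (K : ℝ → X →L[ℂ] X)
    (hK : ∀ x, ContinuousOn (fun s => K s x) (Set.Icc 0 u)) :
    ∃ V : X →L[ℂ] X, ∀ x, V x = ∫ s in (0:ℝ)..u, K s x := by
  obtain ⟨C, hC⟩ := banach_steinhaus (g := fun s : Set.Icc (0:ℝ) u => K s) (fun x => by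
    obtain ⟨C, hC⟩ := isCompact_Icc.exists_bound_of_continuousOn (hK x)
    exact ⟨C, fun s => hC s s.2⟩)
  have hi x := (hK x).intervalIntegrable_of_Icc (μ := volume) hu
  refine ⟨LinearMap.mkContinuous
    { toFun := fun x => ∫ s in (0:ℝ)..u, K s x
      map_add' := fun x y => by
        simp only [map_add]
        exact intervalIntegral.integral_add (hi x) (hi y)
      map_smul' := fun c x => by
        simp only [map_smul, RingHom.id_apply]
        exact intervalIntegral.integral_smul _ _ } (C * |u - 0|) fun x => ?_, fun x => rfl⟩
  have := intervalIntegral.norm_integral_le_of_norm_le_const (a := 0) (b := u)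
    (f := fun s => K s x) (C := C * ‖x‖) (fun s hs => by
      rw [Set.uIoc_of_le hu] at hs
      exact (K s).le_of_opNorm_le (hC ⟨s, hs.1.le, hs.2⟩) x)
  calc _ ≤ C * ‖x‖ * |u - 0| := this
    _ = _ := by ring

theorem hasDerivAt_exp_neg (l : ℂ) (r : ℝ) :
    HasDerivAt (fun r : ℝ => Complex.exp (-l * (r : ℂ))) (-l * Complex.exp (-l * (r : ℂ))) r := by
  have h : HasDerivAt (fun r : ℝ => -l * (r : ℂ)) (-l * 1) r :=
    (Complex.ofRealCLM.hasDerivAt).const_mul (-l)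
  convert h.cexp using 1
  ring

theorem continuous_exp_neg (l : ℂ) : Continuous (fun r : ℝ => Complex.exp (-l * (r : ℂ))) := by
  fun_prop

/-- Integration by parts for `∫₀ᵘ e^{-lr} f(r) dr`. -/
theorem integral_by_parts_exp (l : ℂ) {u : ℝ} (hu : 0 ≤ u) (f : ℝ → X)
    (hf : ContinuousOn f (Set.Ici 0)) :
    (∫ r in (0:ℝ)..u, Complex.exp (-l * (r : ℂ)) • f r) =
      Complex.exp (-l * (u : ℂ)) • (∫ r in (0:ℝ)..u, f r) +
        l • ∫ r in (0:ℝ)..u, Complex.exp (-l * (r : ℂ)) • ∫ s in (0:ℝ)..r, f s := by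
  have hfu : ContinuousOn f (Set.Icc 0 u) := hf.mono Set.Icc_subset_Ici_self
  have hV := continuousOn_primitive_Icc hu hfu
  have he := (continuous_exp_neg l).continuousOn (s := Set.Icc 0 u)
  have i1 : IntervalIntegrable (fun r : ℝ => (-l) • (Complex.exp (-l * (r : ℂ)) •
      ∫ s in (0:ℝ)..r, f s)) volume 0 u :=
    ((he.smul hV).intervalIntegrable_of_Icc (μ := volume) hu).smul (-l)
  have i2 : IntervalIntegrable (fun r : ℝ => Complex.exp (-l * (r : ℂ)) • f r) volume 0 u :=
    (he.smul hfu).intervalIntegrable_of_Icc (μ := volume) hu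
  have h := intervalIntegral.integral_eq_sub_of_hasDerivAt_of_le hu
    (f := fun r : ℝ => Complex.exp (-l * (r : ℂ)) • ∫ s in (0:ℝ)..r, f s)
    (f' := fun r : ℝ => (-l) • (Complex.exp (-l * (r : ℂ)) • ∫ s in (0:ℝ)..r, f s) +
      Complex.exp (-l * (r : ℂ)) • f r) (he.smul hV) (fun r hr => by
        have hd : HasDerivAt (fun r => ∫ s in (0:ℝ)..r, f s) (f r) r :=
          intervalIntegral.integral_hasDerivAt_right
            ((hf.mono Set.Icc_subset_Ici_self).intervalIntegrable_of_Icc hr.1.le)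
            (hf.stronglyMeasurableAtFilter_nhdsWithin measurableSet_Ici r |>.filter_mono (by
              rw [nhdsWithin_eq_nhds.2 (Ici_mem_nhds hr.1)]))
            (hf.continuousAt (Ici_mem_nhds hr.1))
        refine ((hasDerivAt_exp_neg l r).smul hd).congr_deriv ?_
        rw [smul_smul, add_comm]) (i1.add i2)
  rw [intervalIntegral.integral_add i1 i2, intervalIntegral.integral_smul] at h
  simp only [intervalIntegral.integral_same, smul_zero, sub_zero] at h
  rw [← h]
  module

/-- The scalar weight `p(u) = ∫₀ᵘ e^{-lr} r^{α-1}/Γ(α) dr`, the inner integral of `φ_l`. -/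
def pWeight (α : ℝ) (l : ℂ) (u : ℝ) : ℂ :=
  ∫ r in (0:ℝ)..u,
    Complex.exp (-l * (r : ℂ)) * ((r ^ (α - 1) : ℝ) : ℂ) / ((Real.Gamma α : ℝ) : ℂ)

theorem intervalIntegrable_weight (α : ℝ) (hα : 0 < α) (l : ℂ) (u : ℝ) :
    IntervalIntegrable (fun r : ℝ => Complex.exp (-l * (r : ℂ)) * ((r ^ (α - 1) : ℝ) : ℂ) /
      ((Real.Gamma α : ℝ) : ℂ)) volume 0 u := by
  have h : IntervalIntegrable (fun r : ℝ => ((r ^ (α - 1) : ℝ) : ℂ)) volume 0 u :=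
    have h := intervalIntegral.intervalIntegrable_rpow' (r := α - 1) (a := 0) (b := u)
      (by linarith)
    ⟨h.1.ofReal, h.2.ofReal⟩
  exact (h.continuousOn_mul (continuous_exp_neg l).continuousOn).div_const _

theorem continuous_power (α : ℝ) (hα : 0 < α) :
    Continuous (fun r : ℝ => ((r ^ α : ℝ) : ℂ) / ((Real.Gamma (α + 1) : ℝ) : ℂ)) :=
  (Complex.continuous_ofReal.comp (Real.continuous_rpow_const hα.le)).div_const _

/-- Integration by parts for `p`; the derivative of `r^α` may blow up at `0`. -/
theorem pWeight_eq (α : ℝ) (hα : 0 < α) (l : ℂ) {u : ℝ} (hu : 0 ≤ u) :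
    pWeight α l u =
      Complex.exp (-l * (u : ℂ)) * (((u ^ α : ℝ) : ℂ) / ((Real.Gamma (α + 1) : ℝ) : ℂ)) +
        l * ∫ r in (0:ℝ)..u, Complex.exp (-l * (r : ℂ)) *
          (((r ^ α : ℝ) : ℂ) / ((Real.Gamma (α + 1) : ℝ) : ℂ)) := by
  have hc : Continuous (fun r : ℝ => Complex.exp (-l * (r : ℂ)) *
      (((r ^ α : ℝ) : ℂ) / ((Real.Gamma (α + 1) : ℝ) : ℂ))) :=
    (continuous_exp_neg l).mul (continuous_power α hα)
  have i1 := (hc.intervalIntegrable (μ := volume) 0 u).const_mul (-l)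
  have i2 := intervalIntegrable_weight α hα l u
  have hG : (Real.Gamma α : ℂ) ≠ 0 := by exact_mod_cast (Real.Gamma_pos_of_pos hα).ne'
  have hα' : (α : ℂ) ≠ 0 := by exact_mod_cast hα.ne'
  have h := intervalIntegral.integral_eq_sub_of_hasDerivAt_of_le hu hc.continuousOn
    (f' := fun r : ℝ => (-l) * (Complex.exp (-l * (r : ℂ)) *
        (((r ^ α : ℝ) : ℂ) / ((Real.Gamma (α + 1) : ℝ) : ℂ))) +
      Complex.exp (-l * (r : ℂ)) * ((r ^ (α - 1) : ℝ) : ℂ) / ((Real.Gamma α : ℝ) : ℂ))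
    (fun r hr => by
      have hp := ((Real.hasDerivAt_rpow_const (x := r) (p := α)
        (Or.inl hr.1.ne')).ofReal_comp).div_const ((Real.Gamma (α + 1) : ℝ) : ℂ)
      refine ((hasDerivAt_exp_neg l r).mul hp).congr_deriv ?_
      rw [Real.Gamma_add_one hα.ne']
      push_cast
      field_simp) (i1.add i2)
  rw [intervalIntegral.integral_add i1 i2, intervalIntegral.integral_const_mul] at h
  simp only [Real.zero_rpow hα.ne', Complex.ofReal_zero, zero_div, mul_zero, sub_zero] at h
  rw [← h]
  unfold pWeight
  ring

theorem exp_mul_sub_eq (l : ℂ) (t r : ℝ) : Complex.exp (l * ((t - r : ℝ) : ℂ)) =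
    Complex.exp (l * (t : ℂ)) * Complex.exp (-l * (r : ℂ)) := by
  rw [← Complex.exp_add]
  congr 1
  push_cast
  ring

theorem cConst_eq_s13 (α : ℝ) (l : ℂ) (t : ℝ) :
    cConst α l t = Complex.exp (l * (t : ℂ)) * pWeight α l t := by
  unfold cConst pWeight
  rw [← intervalIntegral.integral_const_mul]
  refine intervalIntegral.integral_congr fun r _ => ?_
  simp only [exp_mul_sub_eq]
  ring

theorem phiConst_eq (α : ℝ) (l : ℂ) (t : ℝ) :
    phiConst α l t = ∫ s in (0:ℝ)..t, pWeight α l s := rfl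

/-- With `W(u) x = ∫₀ᵘ e^{-lr} S(r) x dr`, the identity
`(l - A) W(u) x = p(u) x - e^{-lu} S(u) x`, written as a formula for `A (W(u) x)`. -/
theorem resolvent_weighted (α : ℝ) (hα : 0 < α)
    (D : Submodule ℂ X) (A : X →ₗ[ℂ] X) (S : ℝ → X →L[ℂ] X)
    (hcont : ∀ x : X, ContinuousOn (fun u : ℝ => S u x) (Set.Ici (0:ℝ)))
    (μ : ℂ) (R : X →L[ℂ] X)
    (hR1 : ∀ x : X, R x ∈ D) (hR2 : ∀ x : X, μ • R x - A (R x) = x)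
    (hR3 : ∀ x ∈ D, R (μ • x - A x) = x)
    (hint : ∀ u : ℝ, 0 ≤ u → ∀ x : X, (∫ s in (0:ℝ)..u, S s x) ∈ D ∧
      A (∫ s in (0:ℝ)..u, S s x) =
        S u x - (((u ^ α : ℝ) : ℂ) / ((Real.Gamma (α + 1) : ℝ) : ℂ)) • x)
    (l : ℂ) {u : ℝ} (hu : 0 ≤ u) (x : X) :
    (∫ r in (0:ℝ)..u, Complex.exp (-l * (r : ℂ)) • S r x) ∈ D ∧
      A (∫ r in (0:ℝ)..u, Complex.exp (-l * (r : ℂ)) • S r x) =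
        l • (∫ r in (0:ℝ)..u, Complex.exp (-l * (r : ℂ)) • S r x) +
          Complex.exp (-l * (u : ℂ)) • S u x - pWeight α l u • x := by
  have hSu := (hcont x).mono (Set.Icc_subset_Ici_self : Set.Icc 0 u ⊆ _)
  have he := (continuous_exp_neg l).continuousOn (s := Set.Icc 0 u)
  have hS' : ContinuousOn (fun r : ℝ => Complex.exp (-l * (r : ℂ)) • S r x) (Set.Icc 0 u) :=
    he.smul hSu
  have hax : ContinuousOn (fun r : ℝ => (Complex.exp (-l * (r : ℂ)) *
      (((r ^ α : ℝ) : ℂ) / ((Real.Gamma (α + 1) : ℝ) : ℂ))) • x) (Set.Icc 0 u) :=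
    (((continuous_exp_neg l).mul (continuous_power α hα)).smul continuous_const).continuousOn
  obtain ⟨m1, e1⟩ := closed_integral D A μ R hR1 hR2 hR3 hu
    (fun r => Complex.exp (-l * (r : ℂ)) • ∫ s in (0:ℝ)..r, S s x)
    (fun r => Complex.exp (-l * (r : ℂ)) • S r x - (Complex.exp (-l * (r : ℂ)) *
      (((r ^ α : ℝ) : ℂ) / ((Real.Gamma (α + 1) : ℝ) : ℂ))) • x)
    (he.smul (continuousOn_primitive_Icc hu hSu)) (hS'.sub hax)
    (fun s hs => ⟨D.smul_mem _ (hint s hs.1 x).1, by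
      rw [map_smul, (hint s hs.1 x).2, smul_sub, smul_smul]⟩)
  rw [intervalIntegral.integral_sub (hS'.intervalIntegrable_of_Icc hu)
    (hax.intervalIntegrable_of_Icc hu), intervalIntegral.integral_smul_const] at e1
  have hparts := integral_by_parts_exp l hu (fun r => S r x) (hcont x)
  constructor
  · rw [hparts]
    exact D.add_mem (D.smul_mem _ (hint u hu x).1) (D.smul_mem _ m1)
  · rw [pWeight_eq α hα l hu]
    nth_rewrite 1 [hparts]
    rw [map_add, map_smul, map_smul, e1, (hint u hu x).2]
    module

end Integrals

/-! ### Spectral inclusion -/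

theorem stmt_13
    {X : Type*} [NormedAddCommGroup X] [NormedSpace ℂ X] [CompleteSpace X]
    (α : ℝ) (hα : 0 < α)
    (D : Submodule ℂ X) (A : X →ₗ[ℂ] X)
    (S : ℝ → X →L[ℂ] X)
    (hcont : ∀ x : X, ContinuousOn (fun u : ℝ => S u x) (Set.Ici (0:ℝ)))
    (hcomm : ∀ u v : ℝ, 0 ≤ u → 0 ≤ v → ∀ x : X, S u (S v x) = S v (S u x))
    (hres : ∃ μ : ℂ, ∃ R : X →L[ℂ] X, (∀ x : X, R x ∈ D) ∧
      (∀ x : X, μ • R x - A (R x) = x) ∧ (∀ x ∈ D, R (μ • x - A x) = x))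
    (hdom : ∀ u : ℝ, 0 ≤ u → ∀ x ∈ D, S u x ∈ D ∧ A (S u x) = S u (A x) ∧
      S u x = (((u ^ α : ℝ) : ℂ) / ((Real.Gamma (α + 1) : ℝ) : ℂ)) • x +
        ∫ s in (0:ℝ)..u, S s (A x))
    (hint : ∀ u : ℝ, 0 ≤ u → ∀ x : X, (∫ s in (0:ℝ)..u, S s x) ∈ D ∧
      A (∫ s in (0:ℝ)..u, S s x) =
        S u x - (((u ^ α : ℝ) : ℂ) / ((Real.Gamma (α + 1) : ℝ) : ℂ)) • x)
    (l : ℂ) (t : ℝ)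
    (ht : 0 < t) (hphi : phiConst α l t ≠ 0)
    (hreg : ∃ T : X →L[ℂ] X,
      (cSop S α l t).comp (T.comp (cSop S α l t)) = cSop S α l t)
    (hker : ∃ F : Submodule ℂ X, FiniteDimensional ℂ F ∧
      ∀ x : X, cSop S α l t x = 0 →
        ∃ y : X, (∀ n : ℕ, 1 ≤ n → y ∈ Set.range ⇑(cSop S α l t ^ n)) ∧
          ∃ z ∈ F, x = y + z) :
    (∃ B : X →L[ℂ] X, (∀ x : X, B x ∈ D) ∧
      ∀ x ∈ D, l • B (l • x - A x) - A (B (l • x - A x)) = l • x - A x) ∧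
      ∃ F : Submodule ℂ X, FiniteDimensional ℂ F ∧
        ∀ x ∈ D, l • x - A x = 0 →
          ∃ y : X, (∀ n : ℕ, 1 ≤ n →
              y ∈ (fun w => l • w - A w)^[n] '' iterDom (D : Set X) (fun w => l • w - A w) n) ∧
            ∃ z ∈ F, x = y + z := by
  obtain ⟨μ, R, hR1, hR2, hR3⟩ := hres
  have hW : ∀ u : ℝ, 0 ≤ u → ∀ x, _ := fun u hu x =>
    resolvent_weighted α hα D A S hcont μ R hR1 hR2 hR3 hint l hu x
  have hScont : ∀ u x, ContinuousOn (fun r : ℝ => Complex.exp (-l * (r : ℂ)) • S r x)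
      (Set.Icc 0 u) := fun u x =>
    (continuous_exp_neg l).continuousOn.smul ((hcont x).mono Set.Icc_subset_Ici_self)
  have hWex : ∀ u : ℝ, ∃ V : X →L[ℂ] X, 0 ≤ u →
      ∀ x, V x = ∫ r in (0:ℝ)..u, Complex.exp (-l * (r : ℂ)) • S r x := by
    intro u
    by_cases hu : 0 ≤ u
    · obtain ⟨V, hV⟩ := exists_clm_integral_s13 hu (fun r => Complex.exp (-l * (r : ℂ)) • S r)
        (hScont u)
      exact ⟨V, fun _ => hV⟩
    · exact ⟨0, fun h => absurd h hu⟩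
  choose W hWeq using hWex
  have hWcont : ∀ x, ContinuousOn (fun s => W s x) (Set.Icc 0 t) := fun x =>
    (continuousOn_primitive_Icc ht.le (hScont t x)).congr fun s hs => hWeq s hs.1 x
  obtain ⟨L, hLeq⟩ := exists_clm_integral_s13 ht.le W hWcont
  have hWA : ∀ u : ℝ, 0 ≤ u → ∀ x, W u x ∈ D ∧
      A (W u x) = l • W u x + Complex.exp (-l * (u : ℂ)) • S u x - pWeight α l u • x := by
    intro u hu x
    rw [hWeq u hu x]
    exact hW u hu x
  have hinv : Complex.exp (l * (t : ℂ)) * Complex.exp (-l * (t : ℂ)) = 1 := by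
    rw [← Complex.exp_add]
    simp
  have hinv' : Complex.exp (-l * (t : ℂ)) * Complex.exp (l * (t : ℂ)) = 1 := by
    rw [mul_comm, hinv]
  have hQ : ∀ x, cSop S α l t x =
      (Complex.exp (l * (t : ℂ)) * pWeight α l t) • x - S t x := by
    intro x
    simp [cSop, cConst_eq_s13]
  have hE : ∀ x, (Complex.exp (l * (t : ℂ)) • W t) x ∈ D ∧
      l • (Complex.exp (l * (t : ℂ)) • W t) x - A ((Complex.exp (l * (t : ℂ)) • W t) x) =
        cSop S α l t x := by
    intro x
    refine ⟨D.smul_mem _ (hWA t ht.le x).1, ?_⟩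
    rw [smul_apply, map_smul, (hWA t ht.le x).2, hQ]
    calc _ = (Complex.exp (l * (t : ℂ)) * pWeight α l t) • x -
          (Complex.exp (l * (t : ℂ)) * Complex.exp (-l * (t : ℂ))) • S t x := by module
      _ = _ := by rw [hinv, one_smul]
  have hWcomm : ∀ x ∈ D, A (W t x) = W t (A x) := by
    intro x hx
    rw [hWeq t ht.le, hWeq t ht.le]
    exact (closed_integral D A μ R hR1 hR2 hR3 ht.le _ _ (hScont t x) (hScont t (A x))
      (fun s hs => ⟨D.smul_mem _ (hdom s hs.1 x hx).1, by
        rw [map_smul, (hdom s hs.1 x hx).2.1]⟩)).2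
  have hWS : ∀ x, W t (S t x) = S t (W t x) := by
    intro x
    rw [hWeq t ht.le, hWeq t ht.le,
      ← (S t).intervalIntegral_comp_comm ((hScont t x).intervalIntegrable_of_Icc ht.le)]
    refine intervalIntegral.integral_congr fun s hs => ?_
    rw [Set.uIcc_of_le ht.le] at hs
    simp only [map_smul]
    rw [hcomm s t hs.1 ht.le]
  have hpcont : ContinuousOn (fun s => pWeight α l s) (Set.Icc 0 t) := by
    have h := intervalIntegral.continuousOn_primitive_interval' (μ := volume)
      (intervalIntegrable_weight α hα l t) Set.left_mem_uIcc
    rwa [Set.uIcc_of_le ht.le] at h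
  have hL : ∀ x, L x ∈ D ∧ l • L x - A (L x) = phiConst α l t • x -
      Complex.exp (-l * (t : ℂ)) • (Complex.exp (l * (t : ℂ)) • W t) x := by
    intro x
    have c1 : ContinuousOn (fun s => l • W s x) (Set.Icc 0 t) := (hWcont x).const_smul l
    have c3 : ContinuousOn (fun s => pWeight α l s • x) (Set.Icc 0 t) :=
      hpcont.smul continuousOn_const
    obtain ⟨m, e⟩ := closed_integral D A μ R hR1 hR2 hR3 ht.le (fun s => W s x)
      (fun s => l • W s x + Complex.exp (-l * (s : ℂ)) • S s x - pWeight α l s • x)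
      (hWcont x) ((c1.add (hScont t x)).sub c3) (fun s hs => hWA s hs.1 x)
    have i1 := c1.intervalIntegrable_of_Icc (μ := volume) ht.le
    have i2 := (hScont t x).intervalIntegrable_of_Icc (μ := volume) ht.le
    have i3 := c3.intervalIntegrable_of_Icc (μ := volume) ht.le
    rw [intervalIntegral.integral_sub (i1.add i2) i3, intervalIntegral.integral_add i1 i2,
      intervalIntegral.integral_smul, intervalIntegral.integral_smul_const, ← phiConst_eq,
      ← hWeq t ht.le, ← hLeq] at e
    rw [← hLeq] at m
    refine ⟨m, ?_⟩
    rw [e, smul_apply, smul_smul, hinv', one_smul]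
    abel
  refine saphar_of_factorization D A l (phiConst α l t) (Complex.exp (-l * (t : ℂ))) hphi
    (Complex.exp (l * (t : ℂ)) • W t) L (cSop S α l t) hE ?_ ?_ hL hreg hker
  · intro x hx
    rw [← (hE x).2]
    simp only [smul_apply, map_smul, map_sub, hWcomm x hx]
  · intro x
    rw [hQ, hQ]
    simp only [smul_apply, map_smul, map_sub, hWS]
end
end
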